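/- Let (N_k)_{k≥0} be a sequence of positive reals which is log-convex (N_k^2 ≤ N_{k-1} N_{k+1} for all k ≥ 1), set m_k = N_{k+1}/N_k, and define g : ℝ → ℝ by g(x) = Σ_{k=0}^{∞} (N_k / (2 m_k)^k) · ( cos(2 m_k x) + sin(2 m_k x) ). Then this series converges, g is C^∞ on ℝ, |g^{(n)}(x)| ≤ 2^{n+2} N_n for every n ≥ 0 and every x ∈ ℝ, and |g^{(n)}(0)| = Σ_{k=0}^{∞} N_k / (2 m_k)^{k−n} ≥ N_n for every n ≥ 0. -/

import Mathlib

/-- Comparison of a sequence `N` with the geometric sequence of ratio `m k` through its `k`-th term,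
when the successive quotients `m` of `N` are increasing. -/
theorem mul_quotient_pow_le_of_monotone {N m : ℕ → ℝ} (hN : ∀ k, 0 < N k) (hm : ∀ k, 0 < m k)
    (hmono : Monotone m) (hsucc : ∀ k, N (k + 1) = m k * N k) (k n : ℕ) :
    N k * m k ^ n ≤ N n * m k ^ k := by
  have hk := hm k
  rcases le_total k n with h | h
  · induction n, h using Nat.le_induction with
    | base => exact le_rfl
    | succ n hkn ih =>
      calc N k * m k ^ (n + 1) = m k * (N k * m k ^ n) := by ring
        _ ≤ m k * (N n * m k ^ k) := by gcongr
        _ ≤ m n * (N n * m k ^ k) := by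
          have := hN n
          gcongr
          exact hmono hkn
        _ = N (n + 1) * m k ^ k := by rw [hsucc]; ring
  · induction h using Nat.decreasingInduction with
    | self => exact le_rfl
    | of_succ n hnk ih =>
      refine le_of_mul_le_mul_left ?_ hk
      calc m k * (N k * m k ^ n) = N k * m k ^ (n + 1) := by ring
        _ ≤ N (n + 1) * m k ^ k := ih
        _ = m n * (N n * m k ^ k) := by rw [hsucc]; ring
        _ ≤ m k * (N n * m k ^ k) := by
          have := hN n
          gcongr
          exact hmono hnk.le

theorem abs_cos_add_sin_le_two (x : ℝ) : |Real.cos x + Real.sin x| ≤ 2 :=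
  (abs_add_le _ _).trans (by linarith [Real.abs_cos_le_one x, Real.abs_sin_le_one x])

theorem abs_cos_add_sin_nat_mul_pi_div_two (n : ℕ) :
    |Real.cos (n * (Real.pi / 2)) + Real.sin (n * (Real.pi / 2))| = 1 := by
  have h : Real.cos (n * (Real.pi / 2)) * Real.sin (n * (Real.pi / 2)) = 0 := by
    have h2 := Real.sin_two_mul (n * (Real.pi / 2))
    rw [show 2 * (n * (Real.pi / 2)) = n * Real.pi by ring, Real.sin_nat_mul_pi] at h2
    linarith
  rw [← sq_eq_sq₀ (abs_nonneg _) zero_le_one, sq_abs]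
  linarith [Real.cos_sq_add_sin_sq (n * (Real.pi / 2))]

section TrigonometricSeries

variable {ι : Type*} {c a : ι → ℝ}

/-- The series of `n`-th derivatives of `c k * (cos (a k * x) + sin (a k * x))`. -/
noncomputable def trigSeries (c a : ι → ℝ) (n : ℕ) (x : ℝ) : ℝ :=
  ∑' k, c k * a k ^ n *
    (Real.cos (a k * x + n * (Real.pi / 2)) + Real.sin (a k * x + n * (Real.pi / 2)))

theorem abs_trigSeries_term_le (n : ℕ) (k : ι) (x : ℝ) :
    ‖c k * a k ^ n *
      (Real.cos (a k * x + n * (Real.pi / 2)) + Real.sin (a k * x + n * (Real.pi / 2)))‖ ≤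
      2 * |c k * a k ^ n| := by
  rw [Real.norm_eq_abs, abs_mul, mul_comm]
  gcongr
  exact abs_cos_add_sin_le_two _

theorem summable_trigSeries_term {n : ℕ} (h : Summable fun k => c k * a k ^ n) (x : ℝ) :
    Summable fun k => c k * a k ^ n *
      (Real.cos (a k * x + n * (Real.pi / 2)) + Real.sin (a k * x + n * (Real.pi / 2))) :=
  .of_norm_bounded (h.abs.mul_left 2) fun k => abs_trigSeries_term_le n k x

theorem hasDerivAt_trigSeries (h : ∀ n, Summable fun k => c k * a k ^ n) (n : ℕ) (x : ℝ) :
    HasDerivAt (trigSeries c a n) (trigSeries c a (n + 1) x) x := by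
  refine hasDerivAt_tsum (y₀ := 0)
    (g := fun k x => c k * a k ^ n *
      (Real.cos (a k * x + n * (Real.pi / 2)) + Real.sin (a k * x + n * (Real.pi / 2))))
    (g' := fun k x => c k * a k ^ (n + 1) *
      (Real.cos (a k * x + (n + 1 : ℕ) * (Real.pi / 2)) +
        Real.sin (a k * x + (n + 1 : ℕ) * (Real.pi / 2))))
    ((h (n + 1)).abs.mul_left 2) (fun k y => ?_)
    (fun k y => abs_trigSeries_term_le (n + 1) k y) (summable_trigSeries_term (h n) 0) x
  have hlin : HasDerivAt (fun y => a k * y + n * (Real.pi / 2)) (a k) y := by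
    simpa using ((hasDerivAt_id y).const_mul (a k)).add_const (n * (Real.pi / 2))
  refine ((hlin.cos.add hlin.sin).const_mul (c k * a k ^ n)).congr_deriv ?_
  have harg : a k * y + ((n + 1 : ℕ) : ℝ) * (Real.pi / 2) =
      a k * y + n * (Real.pi / 2) + Real.pi / 2 := by
    push_cast
    ring
  rw [harg, Real.cos_add_pi_div_two, Real.sin_add_pi_div_two]
  ring

theorem iteratedDeriv_trigSeries (h : ∀ n, Summable fun k => c k * a k ^ n) (n : ℕ) :
    iteratedDeriv n (trigSeries c a 0) = trigSeries c a n := by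
  induction n with
  | zero => exact iteratedDeriv_zero
  | succ n ih =>
    rw [iteratedDeriv_succ, ih]
    exact funext fun x => (hasDerivAt_trigSeries h n x).deriv

theorem contDiff_trigSeries (h : ∀ n, Summable fun k => c k * a k ^ n) :
    ContDiff ℝ (⊤ : ℕ∞) (trigSeries c a 0) := by
  refine contDiff_of_differentiable_iteratedDeriv fun n _ => ?_
  rw [iteratedDeriv_trigSeries h]
  exact fun x => (hasDerivAt_trigSeries h n x).differentiableAt

theorem abs_trigSeries_le {n : ℕ} (h : Summable fun k => c k * a k ^ n) (x : ℝ) :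
    |trigSeries c a n x| ≤ 2 * ∑' k, |c k * a k ^ n| := by
  rw [← tsum_mul_left]
  exact tsum_of_norm_bounded (h.abs.mul_left 2).hasSum fun k => abs_trigSeries_term_le n k x

theorem abs_trigSeries_zero (n : ℕ) :
    |trigSeries c a n 0| = |∑' k, c k * a k ^ n| := by
  simp only [trigSeries, mul_zero, zero_add]
  rw [tsum_mul_right, abs_mul, abs_cos_add_sin_nat_mul_pi_div_two, mul_one]

end TrigonometricSeries


/-- The trigonometric series construction in the proof of Lemma 2: for a log-convex
positive sequence `N` with quotients `m k = N (k+1) / N k`, the series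
`g x = Σ_k (N k / (2 m k)^k) (cos (2 m k x) + sin (2 m k x))` converges, defines a
`C^∞` function with `|g^(n) x| ≤ 2^(n+2) N n`, and
`|g^(n) 0| = Σ_k N k / (2 m k)^(k - n) ≥ N n`. -/
theorem trigonometric_series_attains_bounds
    (N : ℕ → ℝ) (hNpos : ∀ k, 0 < N k)
    (hlogconv : ∀ k : ℕ, 1 ≤ k → (N k) ^ 2 ≤ N (k - 1) * N (k + 1))
    (m : ℕ → ℝ) (hm : ∀ k, m k = N (k + 1) / N k)
    (g : ℝ → ℝ)
    (hg : ∀ x : ℝ, g x = ∑' k : ℕ,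
      (N k / (2 * m k) ^ k) * (Real.cos (2 * m k * x) + Real.sin (2 * m k * x))) :
    (∀ x : ℝ, Summable (fun k : ℕ =>
      (N k / (2 * m k) ^ k) * (Real.cos (2 * m k * x) + Real.sin (2 * m k * x)))) ∧
    ContDiff ℝ (⊤ : ℕ∞) g ∧
    (∀ (n : ℕ) (x : ℝ), |iteratedDeriv n g x| ≤ 2 ^ (n + 2) * N n) ∧
    (∀ n : ℕ, |iteratedDeriv n g 0| = ∑' k : ℕ, N k / (2 * m k) ^ ((k : ℤ) - (n : ℤ))) ∧
    (∀ n : ℕ, N n ≤ |iteratedDeriv n g 0|) := by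
  have hmpos : ∀ k, 0 < m k := fun k => by
    rw [hm]
    exact div_pos (hNpos _) (hNpos _)
  have hsucc : ∀ k, N (k + 1) = m k * N k := fun k => by
    rw [hm, div_mul_cancel₀ _ (hNpos k).ne']
  have hmono : Monotone m := monotone_nat_of_le_succ fun k => by
    rw [hm, hm, div_le_div_iff₀ (hNpos _) (hNpos _)]
    have := hlogconv (k + 1) (Nat.le_add_left 1 k)
    rw [Nat.add_sub_cancel] at this
    linarith
  let a : ℕ → ℝ := fun k => 2 * m k
  let c : ℕ → ℝ := fun k => N k / (2 * m k) ^ k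
  have hapos : ∀ k, 0 < a k := fun k => mul_pos two_pos (hmpos k)
  have hcapos : ∀ n k, 0 < c k * a k ^ n := fun n k =>
    mul_pos (div_pos (hNpos k) (pow_pos (hapos k) k)) (pow_pos (hapos k) n)
  have hle : ∀ n k, c k * a k ^ n ≤ 2 ^ n * N n * (1 / 2) ^ k := fun n k => by
    have hk := hmpos k
    have key := mul_quotient_pow_le_of_monotone hNpos hmpos hmono hsucc k n
    calc c k * a k ^ n = N k * m k ^ n * (2 ^ n * (1 / 2) ^ k / m k ^ k) := by
          simp only [a, c, mul_pow, one_div, inv_pow]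
          field_simp
      _ ≤ N n * m k ^ k * (2 ^ n * (1 / 2) ^ k / m k ^ k) := by gcongr
      _ = 2 ^ n * N n * (1 / 2) ^ k := by field_simp
  have hgeom : ∀ n, HasSum (fun k => 2 ^ n * N n * (1 / 2 : ℝ) ^ k) (2 ^ n * N n * 2) :=
    fun n => hasSum_geometric_two.mul_left _
  have hsum : ∀ n, Summable fun k => c k * a k ^ n := fun n =>
    .of_nonneg_of_le (fun k => (hcapos n k).le) (hle n) (hgeom n).summable
  have hg' : g = trigSeries c a 0 := funext fun x => by simp [hg, trigSeries, c, a]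
  have hzero : ∀ n, |iteratedDeriv n g 0| = ∑' k, c k * a k ^ n := fun n => by
    rw [hg', iteratedDeriv_trigSeries hsum, abs_trigSeries_zero,
      abs_of_nonneg (tsum_nonneg fun k => (hcapos n k).le)]
  refine ⟨fun x => ?_, hg' ▸ contDiff_trigSeries hsum, fun n x => ?_, fun n => ?_, fun n => ?_⟩
  · simpa [c, a] using summable_trigSeries_term (hsum 0) x
  · rw [hg', iteratedDeriv_trigSeries hsum]
    refine (abs_trigSeries_le (hsum n) x).trans ?_
    simp only [abs_of_pos (hcapos n _)]
    have := (hsum n).tsum_le_tsum (hle n) (hgeom n).summable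
    rw [(hgeom n).tsum_eq] at this
    rw [pow_add]
    linarith
  · rw [hzero]
    refine tsum_congr fun k => ?_
    rw [zpow_sub₀ (hapos k).ne', zpow_natCast, zpow_natCast, div_div_eq_mul_div, div_mul_eq_mul_div]
  · rw [hzero]
    refine le_trans (le_of_eq ?_) ((hsum n).le_tsum n fun k _ => (hcapos n k).le)
    exact (div_mul_cancel₀ _ (pow_pos (hapos n) n).ne').symm
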